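/- Let Ω ⊆ ℝ^d be a bounded open set and f : Ω → [0,∞) continuous. Suppose u : Ω → ℝ is lower semicontinuous, convex on Ω, and is a viscosity supersolution of the Monge–Ampère equation on the set of convex functions, i.e. for every convex φ ∈ C²(Ω) such that u − φ attains a local minimum at a point x ∈ Ω one has M(D²φ(x), f(x)) ≥ 0. Then u is a viscosity supersolution of the Bellman equation: for every φ ∈ C²(Ω) (not necessarily convex) such that u − φ attains a local minimum at x ∈ Ω, one has H(D²φ(x), f(x)) ≥ 0. -/

import Mathlib

open Matrix Set

/-- The set 𝐒₁ of positive semidefinite symmetric d×d real matrices with unit trace. -/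
def S1set (d : ℕ) : Set (Matrix (Fin d) (Fin d) ℝ) :=
  {B | B.PosSemidef ∧ B.trace = 1}

/-- The value −B:A + f·(det B)^(1/d) appearing under the supremum of the Bellman operator. -/
noncomputable def bval (d : ℕ) (A B : Matrix (Fin d) (Fin d) ℝ) (f : ℝ) : ℝ :=
  -((B * A).trace) + f * B.det ^ ((1 : ℝ) / d)

/-- The Bellman operator H(A,f) = sup_{B ∈ 𝐒₁} (−B:A + f·(det B)^(1/d)). -/
noncomputable def bellman (d : ℕ) (A : Matrix (Fin d) (Fin d) ℝ) (f : ℝ) : ℝ :=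
  sSup ((fun B => bval d A B f) '' S1set d)

/-- The Monge–Ampère operator M(A,f) = (f/d)^d − det A. -/
noncomputable def MAop (d : ℕ) (A : Matrix (Fin d) (Fin d) ℝ) (f : ℝ) : ℝ :=
  (f / d) ^ d - A.det

/-- The Hessian matrix D²φ(x) of φ : ℝ^d → ℝ at x. -/
noncomputable def hessianM (d : ℕ) (φ : (Fin d → ℝ) → ℝ) (x : Fin d → ℝ) :
    Matrix (Fin d) (Fin d) ℝ :=
  fun i j => iteratedFDeriv ℝ 2 φ x ![Pi.single i 1, Pi.single j 1]

/-!
Fix `φ ∈ C²` such that `u - φ` has a local minimum at `x`, and put `A = D²φ(x)`. If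
`v ⬝ᵥ A *ᵥ v ≤ 0` for some `v ≠ 0`, then the normalisation of `v vᵀ` is a competitor in the Bellman
supremum with nonnegative value. Otherwise `A` is positive definite, and for `0 < ε < 1` the convex
quadratic polynomial with the value and gradient of `φ` at `x` and Hessian `(1 - ε) A` touches `φ`
from below at `x`, so it is an admissible test function and gives `(1 - ε)^d det A ≤ (f(x) / d)^d`.
Letting `ε → 0`, `det A ≤ (f(x) / d)^d`, which says that the normalisation of `A⁻¹` is a competitor
with nonnegative value.
-/

open Filter Topology Asymptotics

section QuadraticPoly

variable {E F : Type*} [NormedAddCommGroup E] [NormedSpace ℝ E]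
  [NormedAddCommGroup F] [NormedSpace ℝ F]

/-- The polynomial of degree at most two with value `c` and derivative `L` at `x` and, when the
bilinear map `D` is symmetric, second derivative `D`. Such polynomials serve both as second-order
Taylor expansions and as convex test functions. -/
noncomputable def quadraticPoly (x : E) (c : F) (L : E →L[ℝ] F) (D : E →L[ℝ] E →L[ℝ] F)
    (y : E) : F :=
  c + L (y - x) + (1 / 2 : ℝ) • D (y - x) (y - x)

variable (x : E) (c : F) (L : E →L[ℝ] F) {D : E →L[ℝ] E →L[ℝ] F}

@[simp]
lemma quadraticPoly_self (D : E →L[ℝ] E →L[ℝ] F) : quadraticPoly x c L D x = c := by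
  simp [quadraticPoly]

lemma contDiff_quadraticPoly (D : E →L[ℝ] E →L[ℝ] F) {n : WithTop ℕ∞} :
    ContDiff ℝ n (quadraticPoly x c L D) := by
  unfold quadraticPoly
  fun_prop

lemma hasFDerivAt_quadraticPoly (hD : ∀ v w, D v w = D w v) (y : E) :
    HasFDerivAt (quadraticPoly x c L D) (L + D (y - x)) y := by
  have hsub : HasFDerivAt (fun y => y - x) (ContinuousLinearMap.id ℝ E) y :=
    (hasFDerivAt_id y).sub_const x
  have hlin := (L.hasFDerivAt.comp y hsub).const_add c
  have hquad := ((D.hasFDerivAt.comp y hsub).clm_apply hsub).const_smul (1 / 2 : ℝ)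
  refine (hlin.add hquad).congr_fderiv ?_
  ext v
  simp only [ContinuousLinearMap.comp_id, _root_.add_apply, _root_.smul_apply,
    ContinuousLinearMap.flip_apply, Function.comp_apply, hD v (y - x)]
  module

lemma fderiv_fderiv_quadraticPoly (hD : ∀ v w, D v w = D w v) (y : E) :
    fderiv ℝ (fderiv ℝ (quadraticPoly x c L D)) y = D := by
  have hfderiv : fderiv ℝ (quadraticPoly x c L D) = fun y => L + D (y - x) :=
    funext fun y => (hasFDerivAt_quadraticPoly x c L hD y).fderiv
  rw [hfderiv, fderiv_const_add, fderiv_comp_sub, D.fderiv]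

lemma convexOn_quadraticPoly (x : E) (c : ℝ) (L : E →L[ℝ] ℝ) {D : E →L[ℝ] E →L[ℝ] ℝ}
    (hD : ∀ v, 0 ≤ D v v) {s : Set E} (hs : Convex ℝ s) :
    ConvexOn ℝ s (quadraticPoly x c L D) := by
  refine ⟨hs, fun p _ q _ a b ha hb hab => ?_⟩
  obtain rfl : b = 1 - a := by linarith
  have hcomb : a • p + (1 - a) • q - x = a • (p - x) + (1 - a) • (q - x) := by module
  have hgap : 0 ≤ a * (1 - a) * D (p - x - (q - x)) (p - x - (q - x)) :=
    mul_nonneg (mul_nonneg ha hb) (hD _)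
  simp only [quadraticPoly, hcomb]
  generalize p - x = p at *
  generalize q - x = q at *
  simp only [map_add, map_smul, map_sub, _root_.sub_apply, _root_.add_apply, _root_.smul_apply,
    smul_eq_mul] at hgap ⊢
  linarith

theorem isLittleO_sub_quadraticPoly {f : E → F} {f' : E → E →L[ℝ] F} {f'' : E →L[ℝ] E →L[ℝ] F}
    {x : E} (hf : ∀ᶠ y in 𝓝 x, HasFDerivAt f (f' y) y) (hf' : HasFDerivAt f' f'' x) :
    (fun y => f y - quadraticPoly x (f x) (f' x) f'' y) =o[𝓝 x] fun y => ‖y - x‖ ^ 2 := by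
  have hsymm := second_derivative_symmetric_of_eventually hf hf'
  refine isLittleO_iff.2 fun δ hδ => ?_
  obtain ⟨r, hr, hball⟩ :=
    Metric.eventually_nhds_iff_ball.1 (hf.and (hf'.isLittleO.def hδ))
  filter_upwards [Metric.ball_mem_nhds x hr] with y hy
  have hsub : Metric.closedBall x ‖y - x‖ ⊆ Metric.ball x r :=
    Metric.closedBall_subset_ball (by rwa [← dist_eq_norm])
  have hderiv : ∀ z ∈ Metric.closedBall x ‖y - x‖, HasFDerivWithinAt
      (fun y => f y - quadraticPoly x (f x) (f' x) f'' y) (f' z - (f' x + f'' (z - x)))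
      (Metric.closedBall x ‖y - x‖) z := fun z hz =>
    ((hball z (hsub hz)).1.sub (hasFDerivAt_quadraticPoly x _ _ hsymm z)).hasFDerivWithinAt
  have hbound : ∀ z ∈ Metric.closedBall x ‖y - x‖,
      ‖f' z - (f' x + f'' (z - x))‖ ≤ δ * ‖y - x‖ := fun z hz => by
    rw [← sub_sub]
    refine (hball z (hsub hz)).2.trans ?_
    gcongr
    exact mem_closedBall_iff_norm.1 hz
  have hmvt := (convex_closedBall x ‖y - x‖).norm_image_sub_le_of_norm_hasFDerivWithin_le
    hderiv hbound (Metric.mem_closedBall_self (norm_nonneg _)) (mem_closedBall_iff_norm.2 le_rfl)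
  simpa [pow_two, mul_assoc] using hmvt

theorem isCoercive_of_forall_pos [FiniteDimensional ℝ E] {D : E →L[ℝ] E →L[ℝ] ℝ}
    (hD : ∀ v, v ≠ 0 → 0 < D v v) : IsCoercive D := by
  have := FiniteDimensional.proper_real E
  rcases subsingleton_or_nontrivial E with _ | _
  · exact ⟨1, one_pos, fun v => by simp [Subsingleton.elim v 0]⟩
  have hcont : Continuous fun v => D v v := by fun_prop
  obtain ⟨w, hw, hmin⟩ := (isCompact_sphere (0 : E) 1).exists_isMinOn
    (NormedSpace.sphere_nonempty.2 zero_le_one) hcont.continuousOn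
  refine ⟨D w w, hD w (ne_zero_of_mem_unit_sphere ⟨w, hw⟩), fun v => ?_⟩
  rcases eq_or_ne v 0 with rfl | hv
  · simp
  have hnorm : 0 < ‖v‖ := norm_pos_iff.2 hv
  have hle : D w w ≤ D (‖v‖⁻¹ • v) (‖v‖⁻¹ • v) := hmin (by simp [norm_smul, hnorm.ne'])
  simp only [map_smul, _root_.smul_apply, smul_eq_mul] at hle
  calc D w w * ‖v‖ * ‖v‖ ≤ (‖v‖⁻¹ * (‖v‖⁻¹ * D v v)) * ‖v‖ * ‖v‖ := by gcongr
    _ = D v v := by field_simp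

theorem eventually_quadraticPoly_le {f : E → ℝ} {f' : E → E →L[ℝ] ℝ} {f'' : E →L[ℝ] E →L[ℝ] ℝ}
    {x : E} (hf : ∀ᶠ y in 𝓝 x, HasFDerivAt f (f' y) y) (hf' : HasFDerivAt f' f'' x)
    (hcoer : IsCoercive f'') {ε : ℝ} (hε : 0 < ε) :
    ∀ᶠ y in 𝓝 x, quadraticPoly x (f x) (f' x) ((1 - ε) • f'') y ≤ f y := by
  obtain ⟨c, hc, hcf''⟩ := hcoer
  have htaylor := (isLittleO_sub_quadraticPoly hf hf').def (by positivity : 0 < ε / 2 * c)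
  filter_upwards [htaylor] with y hy
  have hgap : quadraticPoly x (f x) (f' x) ((1 - ε) • f'') y
      = quadraticPoly x (f x) (f' x) f'' y - ε / 2 * f'' (y - x) (y - x) := by
    simp only [quadraticPoly, _root_.smul_apply, smul_eq_mul]
    ring
  have hremainder : -(ε / 2 * c * ‖y - x‖ ^ 2) ≤ f y - quadraticPoly x (f x) (f' x) f'' y := by
    rw [norm_pow, norm_norm, Real.norm_eq_abs] at hy
    exact (abs_le.1 hy).1
  have hcoercive : ε / 2 * (c * ‖y - x‖ * ‖y - x‖) ≤ ε / 2 * f'' (y - x) (y - x) :=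
    mul_le_mul_of_nonneg_left (hcf'' (y - x)) (by positivity)
  linarith

end QuadraticPoly

section Hessian

variable {d : ℕ} {φ : (Fin d → ℝ) → ℝ} {x : Fin d → ℝ}

lemma hessianM_eq_toMatrix₂' (φ : (Fin d → ℝ) → ℝ) (x : Fin d → ℝ) :
    hessianM d φ x = LinearMap.toMatrix₂' ℝ (fderiv ℝ (fderiv ℝ φ) x).toLinearMap₁₂ := by
  ext i j
  simp [hessianM, iteratedFDeriv_two_apply]

lemma dotProduct_hessianM_mulVec (φ : (Fin d → ℝ) → ℝ) (x v w : Fin d → ℝ) :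
    v ⬝ᵥ hessianM d φ x *ᵥ w = fderiv ℝ (fderiv ℝ φ) x v w := by
  rw [hessianM_eq_toMatrix₂', ← toLinearMap₂'_apply', toLinearMap₂'_toMatrix',
    ContinuousLinearMap.toLinearMap₁₂_apply_apply_apply]

lemma isHermitian_hessianM (hφ : ContDiffAt ℝ 2 φ x) : (hessianM d φ x).IsHermitian := by
  have hsymm : IsSymmSndFDerivAt ℝ φ x := hφ.isSymmSndFDerivAt (by simp)
  rw [hessianM_eq_toMatrix₂']
  ext i j
  simp [hsymm.eq (Pi.single i 1)]

lemma hessianM_quadraticPoly_smul (hφ : ContDiffAt ℝ 2 φ x) (c t : ℝ)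
    (L : (Fin d → ℝ) →L[ℝ] ℝ) (y : Fin d → ℝ) :
    hessianM d (quadraticPoly x c L (t • fderiv ℝ (fderiv ℝ φ) x)) y = t • hessianM d φ x := by
  have hsymm : IsSymmSndFDerivAt ℝ φ x := hφ.isSymmSndFDerivAt (by simp)
  rw [hessianM_eq_toMatrix₂', hessianM_eq_toMatrix₂', fderiv_fderiv_quadraticPoly, map_smul,
    map_smul]
  exact fun v w => congrArg (t * ·) (hsymm v w)

lemma isCoercive_of_posDef_hessianM (hA : (hessianM d φ x).PosDef) :
    IsCoercive (fderiv ℝ (fderiv ℝ φ) x) :=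
  isCoercive_of_forall_pos fun v hv => by
    simpa only [star_trivial, dotProduct_hessianM_mulVec] using hA.dotProduct_mulVec_pos hv

end Hessian

section Bellman

lemma posSemidef_abs_apply_le_trace {n : Type*} [Fintype n] {B : Matrix n n ℝ}
    (hB : B.PosSemidef) (i j : n) : |B i j| ≤ B.trace := by
  classical
  have hdiag : ∀ k, B k k ≤ B.trace := fun k =>
    Finset.single_le_sum (f := fun k => B k k) (fun _ _ => hB.diag_nonneg) (Finset.mem_univ k)
  have hsymm : B j i = B i j := hB.isHermitian.apply i j
  have hadd := hB.dotProduct_mulVec_nonneg (Pi.single i 1 + Pi.single j 1)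
  have hsub := hB.dotProduct_mulVec_nonneg (Pi.single i 1 - Pi.single j 1)
  simp only [star_trivial, mulVec_add, mulVec_sub, add_dotProduct, sub_dotProduct, dotProduct_add,
    dotProduct_sub, mulVec_single_one, single_one_dotProduct, col_apply, hsymm] at hadd hsub
  exact abs_le.2 ⟨by linarith [hdiag i, hdiag j], by linarith [hdiag i, hdiag j]⟩

variable {d : ℕ} {A B : Matrix (Fin d) (Fin d) ℝ} {f : ℝ}

lemma continuous_bval (A : Matrix (Fin d) (Fin d) ℝ) (f : ℝ) :
    Continuous fun B => bval d A B f := by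
  have hdet : Continuous fun B : Matrix (Fin d) (Fin d) ℝ => B.det ^ ((1 : ℝ) / d) :=
    continuous_id.matrix_det.rpow_const fun _ => .inr (by positivity)
  unfold bval
  fun_prop

lemma bddAbove_bval_image_S1set (A : Matrix (Fin d) (Fin d) ℝ) (f : ℝ) :
    BddAbove ((fun B => bval d A B f) '' S1set d) := by
  have hcompact : IsCompact
      (univ.pi fun _ => univ.pi fun _ => Icc (-1) 1 : Set (Matrix (Fin d) (Fin d) ℝ)) :=
    isCompact_univ_pi fun _ => isCompact_univ_pi fun _ => isCompact_Icc
  refine (hcompact.bddAbove_image (continuous_bval A f).continuousOn).mono (image_mono ?_)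
  rintro B ⟨hB, htrace⟩ i - j -
  exact abs_le.1 (htrace ▸ posSemidef_abs_apply_le_trace hB i j)

lemma bval_le_bellman (A : Matrix (Fin d) (Fin d) ℝ) (hB : B ∈ S1set d) (f : ℝ) :
    bval d A B f ≤ bellman d A f :=
  le_csSup (bddAbove_bval_image_S1set A f) (mem_image_of_mem _ hB)

lemma bval_smul (hd : d ≠ 0) (A : Matrix (Fin d) (Fin d) ℝ) (hB : 0 ≤ B.det) (f : ℝ) {t : ℝ}
    (ht : 0 ≤ t) : bval d A (t • B) f = t * bval d A B f := by
  have hroot : (t • B).det ^ ((1 : ℝ) / d) = t * B.det ^ ((1 : ℝ) / d) := by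
    rw [det_smul, Fintype.card_fin, Real.mul_rpow (pow_nonneg ht d) hB, one_div,
      Real.pow_rpow_inv_natCast ht hd]
  rw [bval, bval, hroot, smul_mul, trace_smul, smul_eq_mul]
  ring

lemma bellman_nonneg_of_bval_nonneg (hd : d ≠ 0) (hB : B.PosSemidef) (hB0 : B ≠ 0)
    (h : 0 ≤ bval d A B f) : 0 ≤ bellman d A f := by
  have htrace : 0 < B.trace := hB.trace_nonneg.lt_of_ne' (mt hB.trace_eq_zero_iff.1 hB0)
  have hinv : 0 ≤ B.trace⁻¹ := inv_nonneg.2 htrace.le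
  have hmem : B.trace⁻¹ • B ∈ S1set d :=
    ⟨hB.smul hinv, by rw [trace_smul, smul_eq_mul, inv_mul_cancel₀ htrace.ne']⟩
  calc 0 ≤ B.trace⁻¹ * bval d A B f := mul_nonneg hinv h
    _ = bval d A (B.trace⁻¹ • B) f := (bval_smul hd A hB.det_nonneg f hinv).symm
    _ ≤ bellman d A f := bval_le_bellman A hmem f

lemma bellman_nonneg_of_dotProduct_mulVec_nonpos (hd : d ≠ 0) (hf : 0 ≤ f) {v : Fin d → ℝ}
    (hv : v ≠ 0) (h : v ⬝ᵥ A *ᵥ v ≤ 0) : 0 ≤ bellman d A f := by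
  have hB : (vecMulVec v v).PosSemidef := by simpa using posSemidef_vecMulVec_self_star v
  refine bellman_nonneg_of_bval_nonneg hd hB (by simpa using hv) ?_
  have htrace : (vecMulVec v v * A).trace = v ⬝ᵥ A *ᵥ v := by
    rw [vecMulVec_mul, trace_vecMulVec, dotProduct_mulVec, dotProduct_comm]
  rw [bval, htrace]
  exact add_nonneg (neg_nonneg.2 h) (mul_nonneg hf (Real.rpow_nonneg hB.det_nonneg _))

lemma bellman_nonneg_of_posDef (hd : d ≠ 0) (hf : 0 ≤ f) (hA : A.PosDef) (h : 0 ≤ MAop d A f) :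
    0 ≤ bellman d A f := by
  have : Nonempty (Fin d) := Fin.pos_iff_nonempty.1 (Nat.pos_of_ne_zero hd)
  have hdR : (0 : ℝ) < d := by positivity
  refine bellman_nonneg_of_bval_nonneg hd hA.inv.posSemidef hA.inv.isUnit.ne_zero ?_
  have htrace : (A⁻¹ * A).trace = d := by
    rw [nonsing_inv_mul _ hA.det_pos.ne'.isUnit, trace_one, Fintype.card_fin]
  have hroot : A⁻¹.det ^ ((1 : ℝ) / d) = (A.det ^ ((1 : ℝ) / d))⁻¹ := by
    rw [det_nonsing_inv, Ring.inverse_eq_inv', Real.inv_rpow hA.det_pos.le]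
  have hrootpos : 0 < A.det ^ ((1 : ℝ) / d) := Real.rpow_pos_of_pos hA.det_pos _
  have hrootle : A.det ^ ((1 : ℝ) / d) ≤ f / d := by
    rw [one_div, Real.rpow_inv_le_iff_of_pos hA.det_pos.le (by positivity) hdR, Real.rpow_natCast]
    exact sub_nonneg.1 h
  have hle : (d : ℝ) ≤ f * (A.det ^ ((1 : ℝ) / d))⁻¹ := by
    rw [← div_eq_mul_inv, le_div_comm₀ hdR hrootpos]
    exact hrootle
  rw [bval, htrace, hroot]
  linarith

theorem bellman_nonneg_of_isHermitian (hd : d ≠ 0) (hf : 0 ≤ f) (hA : A.IsHermitian)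
    (h : A.PosDef → 0 ≤ MAop d A f) : 0 ≤ bellman d A f := by
  by_cases hpos : ∀ v ≠ 0, 0 < v ⬝ᵥ A *ᵥ v
  · have hA : A.PosDef := .of_dotProduct_mulVec_pos hA (by simpa only [star_trivial] using hpos)
    exact bellman_nonneg_of_posDef hd hf hA (h hA)
  · push Not at hpos
    obtain ⟨v, hv, hle⟩ := hpos
    exact bellman_nonneg_of_dotProduct_mulVec_nonpos hd hf hv hle

end Bellman

section Viscosity

lemma isLocalMinOn_sub_of_eventually_le {X : Type*} [TopologicalSpace X] {u φ ψ : X → ℝ}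
    {s : Set X} {x : X} (hmin : IsLocalMinOn (fun y => u y - φ y) s x) (hx : ψ x = φ x)
    (hle : ∀ᶠ y in 𝓝[s] x, ψ y ≤ φ y) : IsLocalMinOn (fun y => u y - ψ y) s x := by
  filter_upwards [hmin, hle] with y hy hψφ
  linarith

variable {d : ℕ} {Ω : Set (Fin d → ℝ)} {u φ : (Fin d → ℝ) → ℝ} {x : Fin d → ℝ}

lemma exists_convex_test_function_hessianM_eq_smul (hΩ : Convex ℝ Ω) (hφ : ContDiffAt ℝ 2 φ x)
    (hmin : IsLocalMinOn (fun y => u y - φ y) Ω x) (hA : (hessianM d φ x).PosDef) {ε : ℝ}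
    (hε : ε ∈ Ioo 0 1) :
    ∃ ψ, ContDiff ℝ 2 ψ ∧ ConvexOn ℝ Ω ψ ∧ IsLocalMinOn (fun y => u y - ψ y) Ω x ∧
      hessianM d ψ x = (1 - ε) • hessianM d φ x := by
  have hderiv : ∀ᶠ y in 𝓝 x, HasFDerivAt φ (fderiv ℝ φ y) y := by
    filter_upwards [hφ.eventually (by simp)] with y hy
    exact (hy.differentiableAt two_ne_zero).hasFDerivAt
  have hderiv2 : HasFDerivAt (fderiv ℝ φ) (fderiv ℝ (fderiv ℝ φ) x) x :=
    ((hφ.fderiv_right (m := 1) (by norm_num)).differentiableAt one_ne_zero).hasFDerivAt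
  have hnonneg : ∀ v, 0 ≤ ((1 - ε) • fderiv ℝ (fderiv ℝ φ) x) v v := fun v => by
    have hv := hA.posSemidef.dotProduct_mulVec_nonneg v
    rw [star_trivial, dotProduct_hessianM_mulVec] at hv
    exact mul_nonneg (sub_nonneg.2 hε.2.le) hv
  have htouch := eventually_quadraticPoly_le hderiv hderiv2 (isCoercive_of_posDef_hessianM hA) hε.1
  exact ⟨_, contDiff_quadraticPoly x (φ x) (fderiv ℝ φ x) _,
    convexOn_quadraticPoly _ _ _ hnonneg hΩ,
    isLocalMinOn_sub_of_eventually_le hmin (quadraticPoly_self _ _ _ _)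
      (htouch.filter_mono nhdsWithin_le_nhds),
    hessianM_quadraticPoly_smul hφ _ _ _ _⟩

lemma MAop_nonneg_of_forall_smul {A : Matrix (Fin d) (Fin d) ℝ} {f : ℝ}
    (h : ∀ ε ∈ Ioo (0 : ℝ) 1, 0 ≤ MAop d ((1 - ε) • A) f) : 0 ≤ MAop d A f := by
  have hcont : Continuous fun ε : ℝ => MAop d ((1 - ε) • A) f := by
    unfold MAop
    fun_prop
  have hlim : Tendsto (fun ε : ℝ => MAop d ((1 - ε) • A) f) (𝓝[>] 0) (𝓝 (MAop d A f)) := by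
    simpa using (hcont.tendsto 0).mono_left nhdsWithin_le_nhds
  exact ge_of_tendsto hlim (mem_of_superset (Ioo_mem_nhdsGT one_pos) h)

theorem stmt_3_general (hd : d ≠ 0) (hΩo : IsOpen Ω) (hΩc : Convex ℝ Ω)
    {f : (Fin d → ℝ) → ℝ} (hf0 : ∀ x ∈ Ω, 0 ≤ f x)
    (hMAsup : ∀ φ : (Fin d → ℝ) → ℝ, ContDiffOn ℝ 2 φ Ω → ConvexOn ℝ Ω φ →
      ∀ x ∈ Ω, IsLocalMinOn (fun y => u y - φ y) Ω x →
        0 ≤ MAop d (hessianM d φ x) (f x)) :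
    ∀ φ : (Fin d → ℝ) → ℝ, ContDiffOn ℝ 2 φ Ω →
      ∀ x ∈ Ω, IsLocalMinOn (fun y => u y - φ y) Ω x →
        0 ≤ bellman d (hessianM d φ x) (f x) := by
  intro φ hφ x hx hmin
  have hφx : ContDiffAt ℝ 2 φ x := hφ.contDiffAt (hΩo.mem_nhds hx)
  refine bellman_nonneg_of_isHermitian hd (hf0 x hx) (isHermitian_hessianM hφx) fun hA => ?_
  refine MAop_nonneg_of_forall_smul fun ε hε => ?_
  obtain ⟨ψ, hψ, hψconvex, hψmin, hψhess⟩ :=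
    exists_convex_test_function_hessianM_eq_smul hΩc hφx hmin hA hε
  rw [← hψhess]
  exact hMAsup ψ hψ.contDiffOn hψconvex x hx hψmin

end Viscosity

/-- A convex viscosity supersolution of the Monge–Ampère equation on the set of convex
functions is a viscosity supersolution of the Bellman equation. -/
theorem stmt_3 (d : ℕ) (hd : 2 ≤ d) (Ω : Set (Fin d → ℝ)) (hΩo : IsOpen Ω)
    (hΩb : Bornology.IsBounded Ω)
    (f : (Fin d → ℝ) → ℝ) (hfc : ContinuousOn f Ω) (hf0 : ∀ x ∈ Ω, 0 ≤ f x)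
    (u : (Fin d → ℝ) → ℝ) (hlsc : LowerSemicontinuousOn u Ω) (hucvx : ConvexOn ℝ Ω u)
    (hMAsup : ∀ φ : (Fin d → ℝ) → ℝ, ContDiffOn ℝ 2 φ Ω → ConvexOn ℝ Ω φ →
      ∀ x ∈ Ω, IsLocalMinOn (fun y => u y - φ y) Ω x →
        0 ≤ MAop d (hessianM d φ x) (f x)) :
    ∀ φ : (Fin d → ℝ) → ℝ, ContDiffOn ℝ 2 φ Ω →
      ∀ x ∈ Ω, IsLocalMinOn (fun y => u y - φ y) Ω x →
        0 ≤ bellman d (hessianM d φ x) (f x) :=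
  stmt_3_general (by lia) hΩo hucvx.1 hf0 hMAsup
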